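/- Consider any run of the multi-level Adams' method (with arbitrary tie-breaking) on a multi-level apportionment instance. Let h ≥ 1, let a_0 = 0, a_1, …, a_k (listed from the root downwards) be the nodes that receive the h-th seat, and let V denote the allocation after h−1 seats (i.e., just before the h-th seat is allocated). Then V_{a_{j−1}} / R_{a_{j−1}} ≥ V_{a_j} / R_{a_j} for each j ∈ {1,…,k}. -/

import Mathlib

/-- A multi-level apportionment instance: a rooted tree on nodes `0, …, n`
(root `0`, encoded by a parent function with `parent i < i` for `i ≠ 0`),
together with entitlements `W`. -/
structure MLA where
  n : ℕ
  parent : Fin (n + 1) → Fin (n + 1)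
  parent_lt : ∀ i : Fin (n + 1), i ≠ 0 → (parent i : ℕ) < (i : ℕ)
  W : Fin (n + 1) → ℝ
  W_pos : ∀ i, 0 < W i
  W_le_one : ∀ i, W i ≤ 1
  W_root : W 0 = 1
  W_sum : ∀ i : Fin (n + 1),
    (Finset.univ.filter (fun c => c ≠ 0 ∧ parent c = i)).Nonempty →
    ∑ c ∈ Finset.univ.filter (fun c => c ≠ 0 ∧ parent c = i), W c = 1

namespace MLA

variable (T : MLA)

/-- The set of children of node `i`. -/
def children (i : Fin (T.n + 1)) : Finset (Fin (T.n + 1)) :=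
  Finset.univ.filter (fun c => c ≠ 0 ∧ T.parent c = i)

/-- The ancestor set `A(i)`: `A(0) = {0}` and `A(i) = {parent i} ∪ A(parent i)`. -/
def ancestors (i : Fin (T.n + 1)) : Finset (Fin (T.n + 1)) :=
  if h : i = 0 then {0} else insert (T.parent i) (ancestors (T.parent i))
termination_by (i : ℕ)
decreasing_by exact T.parent_lt i h

/-- The entitlement of node `i` relative to the root: `R i = ∏_{a ∈ A(i) ∪ {i}} W a`. -/
def R (i : Fin (T.n + 1)) : ℝ := ∏ a ∈ insert i (T.ancestors i), T.W a

/-- `V` is an allocation of `h` seats. -/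
def IsAlloc (h : ℕ) (V : Fin (T.n + 1) → ℕ) : Prop :=
  V 0 = h ∧ ∀ i, (T.children i).Nonempty → V i = ∑ c ∈ T.children i, V c

/-- `V` fulfills lower quota: `V i ≥ LQ i = max_{a ∈ A(i)} ⌊(R i / R a) · V a⌋`. -/
def FulfillsLowerQuota (V : Fin (T.n + 1) → ℕ) : Prop :=
  ∀ i, ∀ a ∈ T.ancestors i, ⌊T.R i / T.R a * (V a : ℝ)⌋ ≤ (V i : ℤ)

/-- `V` fulfills upper quota: `V i ≤ UQ i = min_{a ∈ A(i)} ⌈(R i / R a) · V a⌉`. -/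
def FulfillsUpperQuota (V : Fin (T.n + 1) → ℕ) : Prop :=
  ∀ i, ∀ a ∈ T.ancestors i, (V i : ℤ) ≤ ⌈T.R i / T.R a * (V a : ℝ)⌉


/-- `P` is the set of nodes receiving the new seat in one step of an iterative
method with selection criterion `crit` (to be minimized among children) and
eligibility constraint `elig`: `P` is a root-to-leaf path, each non-root node on
the path is an eligible child of its parent minimizing `crit` among all eligible
children, and the seat counts along `P` each increase by one. -/
def IsStepWith (crit : (Fin (T.n + 1) → ℕ) → Fin (T.n + 1) → ℝ)
    (elig : (Fin (T.n + 1) → ℕ) → Fin (T.n + 1) → Prop)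
    (P : Finset (Fin (T.n + 1))) (Vh Vh1 : Fin (T.n + 1) → ℕ) : Prop :=
  (0 : Fin (T.n + 1)) ∈ P ∧
  (∀ i ∈ P, i ≠ 0 → T.parent i ∈ P) ∧
  (∀ i ∈ P, (T.children i).Nonempty → ∃ c ∈ T.children i, c ∈ P) ∧
  (∀ c ∈ P, ∀ d ∈ P, c ≠ 0 → d ≠ 0 → T.parent c = T.parent d → c = d) ∧
  (∀ c ∈ P, c ≠ 0 → elig Vh c ∧
    ∀ d ∈ T.children (T.parent c), elig Vh d → crit Vh c ≤ crit Vh d) ∧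
  (∀ i, Vh1 i = Vh i + if i ∈ P then 1 else 0)

/-- `V : ℕ → (nodes → ℕ)` is a run of the iterative method given by `crit` and
`elig` (with arbitrary tie-breaking): `V 0` is the all-zero allocation and each
`V (h+1)` is obtained from `V h` by allocating one more seat along a path. -/
def IsRun (crit : (Fin (T.n + 1) → ℕ) → Fin (T.n + 1) → ℝ)
    (elig : (Fin (T.n + 1) → ℕ) → Fin (T.n + 1) → Prop)
    (V : ℕ → Fin (T.n + 1) → ℕ) : Prop :=
  (∀ i, V 0 i = 0) ∧ ∀ h, ∃ P, T.IsStepWith crit elig P (V h) (V (h + 1))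

/-- Adams' criterion: a child `c` minimizing `V c / R c` receives the seat. -/
noncomputable def adamsCrit (V : Fin (T.n + 1) → ℕ) (c : Fin (T.n + 1)) : ℝ :=
  (V c : ℝ) / T.R c

/-- Jefferson's criterion: a child `c` minimizing `(V c + 1) / R c` receives the seat. -/
noncomputable def jeffersonCrit (V : Fin (T.n + 1) → ℕ) (c : Fin (T.n + 1)) : ℝ :=
  ((V c : ℝ) + 1) / T.R c

/-- Trivial eligibility constraint: every child is eligible. -/
def trivElig (_ : Fin (T.n + 1) → ℕ) (_ : Fin (T.n + 1)) : Prop := True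

/-- Eligibility constraint of the quota method: `V c / W c < V (parent c) + 1`. -/
def quotaElig (V : Fin (T.n + 1) → ℕ) (c : Fin (T.n + 1)) : Prop :=
  (V c : ℝ) / T.W c < (V (T.parent c) : ℝ) + 1

/-- Eligibility constraint of the upper-compliant quota method:
`V c / R c < (V a + 1) / R a` for every ancestor `a` of `c`. -/
def ucElig (V : Fin (T.n + 1) → ℕ) (c : Fin (T.n + 1)) : Prop :=
  ∀ a ∈ T.ancestors c, (V c : ℝ) / T.R c < ((V a : ℝ) + 1) / T.R a

end MLA

/-!
The siblings of a node `c` on the path have ratios `V/R` at least that of `c`. Entitlements and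
seats are both additive over children, so the ratio of the parent is the mediant of the ratios of
its children and hence at least the smallest of them, which is that of `c`. Additivity of the seats
is preserved by every step: the path contains exactly one child of each inner node on it, and no
child of any other node.
-/

lemma le_sum_div_sum {ι K : Type*} [Field K] [LinearOrder K] [IsStrictOrderedRing K]
    {s : Finset ι} {x r : ι → K} {q : K} (hs : s.Nonempty) (hr : ∀ i ∈ s, 0 < r i)
    (hq : ∀ i ∈ s, q ≤ x i / r i) : q ≤ (∑ i ∈ s, x i) / ∑ i ∈ s, r i := by
  rw [le_div_iff₀ (Finset.sum_pos hr hs), Finset.mul_sum]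
  exact Finset.sum_le_sum fun i hi => (le_div_iff₀ (hr i hi)).mp (hq i hi)

namespace MLA

variable {T : MLA} {i a c : Fin (T.n + 1)}

lemma mem_children : c ∈ T.children i ↔ c ≠ 0 ∧ T.parent c = i := by
  simp only [children, Finset.mem_filter, Finset.mem_univ, true_and]

lemma ancestors_of_ne_zero (hi : i ≠ 0) :
    T.ancestors i = insert (T.parent i) (T.ancestors (T.parent i)) := by
  rw [ancestors, dif_neg hi]

lemma le_of_mem_ancestors (ha : a ∈ T.ancestors i) : a ≤ i := by
  induction i using ancestors.induct with
  | case1 =>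
    rw [ancestors, dif_pos rfl, Finset.mem_singleton] at ha
    exact ha.le
  | case2 i hi ih =>
    have hlt : T.parent i < i := T.parent_lt i hi
    rw [ancestors_of_ne_zero hi, Finset.mem_insert] at ha
    rcases ha with rfl | ha
    · exact hlt.le
    · exact (ih ha).trans hlt.le

lemma notMem_ancestors_self (hi : i ≠ 0) : i ∉ T.ancestors i := by
  have hlt : T.parent i < i := T.parent_lt i hi
  rw [ancestors_of_ne_zero hi, Finset.mem_insert, not_or]
  exact ⟨hlt.ne', fun h => hlt.not_ge (le_of_mem_ancestors h)⟩

lemma R_pos (T : MLA) (i : Fin (T.n + 1)) : 0 < T.R i :=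
  Finset.prod_pos fun a _ => T.W_pos a

lemma R_eq_W_mul_R_parent (hi : i ≠ 0) : T.R i = T.W i * T.R (T.parent i) := by
  rw [R, Finset.prod_insert (notMem_ancestors_self hi), ancestors_of_ne_zero hi, R]

lemma sum_R_children (hi : (T.children i).Nonempty) : ∑ c ∈ T.children i, T.R c = T.R i :=
  calc ∑ c ∈ T.children i, T.R c
      = ∑ c ∈ T.children i, T.W c * T.R i := Finset.sum_congr rfl fun c hc => by
        obtain ⟨hc0, rfl⟩ := mem_children.mp hc
        exact R_eq_W_mul_R_parent hc0
    _ = (∑ c ∈ T.children i, T.W c) * T.R i := (Finset.sum_mul ..).symm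
    _ = T.R i := by rw [children, T.W_sum i hi, one_mul]

section Allocation

variable {crit : (Fin (T.n + 1) → ℕ) → Fin (T.n + 1) → ℝ}
  {elig : (Fin (T.n + 1) → ℕ) → Fin (T.n + 1) → Prop} {P : Finset (Fin (T.n + 1))}

lemma IsStepWith.card_children_filter_mem {V V' : Fin (T.n + 1) → ℕ}
    (hstep : T.IsStepWith crit elig P V V') (hi : (T.children i).Nonempty) :
    ((T.children i).filter (· ∈ P)).card = if i ∈ P then 1 else 0 := by
  obtain ⟨-, parent_mem, exists_child_mem, sibling_unique, -, -⟩ := hstep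
  split_ifs with hiP
  · obtain ⟨c, hc, hcP⟩ := exists_child_mem i hiP hi
    obtain ⟨hc0, hci⟩ := mem_children.mp hc
    refine Finset.card_eq_one.mpr
      ⟨c, Finset.eq_singleton_iff_unique_mem.mpr ⟨Finset.mem_filter.mpr ⟨hc, hcP⟩, ?_⟩⟩
    intro d hd
    obtain ⟨hd, hdP⟩ := Finset.mem_filter.mp hd
    obtain ⟨hd0, hdi⟩ := mem_children.mp hd
    exact sibling_unique d hdP c hcP hd0 hc0 (hdi.trans hci.symm)
  · refine Finset.card_eq_zero.mpr (Finset.filter_eq_empty_iff.mpr fun c hc hcP => hiP ?_)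
    obtain ⟨hc0, rfl⟩ := mem_children.mp hc
    exact parent_mem c hcP hc0

lemma IsStepWith.isAlloc_succ {V V' : Fin (T.n + 1) → ℕ} {h : ℕ}
    (hstep : T.IsStepWith crit elig P V V') (hV : T.IsAlloc h V) : T.IsAlloc (h + 1) V' := by
  have ⟨root_mem, _, _, _, _, hV'⟩ := hstep
  refine ⟨by rw [hV', hV.1, if_pos root_mem], fun i hi => ?_⟩
  calc V' i = (∑ c ∈ T.children i, V c) + if i ∈ P then 1 else 0 := by rw [hV', hV.2 i hi]
    _ = (∑ c ∈ T.children i, V c) + ∑ c ∈ T.children i, if c ∈ P then 1 else 0 := by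
      rw [Finset.sum_boole, hstep.card_children_filter_mem hi, Nat.cast_id]
    _ = ∑ c ∈ T.children i, V' c := by simp only [hV', Finset.sum_add_distrib]

lemma IsRun.isAlloc {V : ℕ → Fin (T.n + 1) → ℕ} (hrun : T.IsRun crit elig V) (h : ℕ) :
    T.IsAlloc h (V h) := by
  induction h with
  | zero => exact ⟨hrun.1 0, fun i _ => by simp only [hrun.1, Finset.sum_const_zero]⟩
  | succ h ih =>
    obtain ⟨P, hstep⟩ := hrun.2 h
    exact hstep.isAlloc_succ ih

end Allocation

end MLA

theorem adams_path_ratios_decrease_general {T : MLA} {V V' : Fin (T.n + 1) → ℕ} {h : ℕ}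
    (hV : T.IsAlloc h V) {P : Finset (Fin (T.n + 1))}
    (hP : T.IsStepWith T.adamsCrit T.trivElig P V V')
    {c : Fin (T.n + 1)} (hc : c ∈ P) (hc0 : c ≠ 0) :
    (V c : ℝ) / T.R c ≤ (V (T.parent c) : ℝ) / T.R (T.parent c) := by
  obtain ⟨-, -, -, -, minimal, -⟩ := hP
  have hmin : ∀ d ∈ T.children (T.parent c), (V c : ℝ) / T.R c ≤ V d / T.R d :=
    fun d hd => (minimal c hc hc0).2 d hd trivial
  have hne : (T.children (T.parent c)).Nonempty := ⟨c, MLA.mem_children.mpr ⟨hc0, rfl⟩⟩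
  rw [hV.2 _ hne, Nat.cast_sum, ← MLA.sum_R_children hne]
  exact le_sum_div_sum hne (fun d _ => T.R_pos d) hmin

/-- In any run of the multi-level Adams' method, if `P` is the
root-to-leaf path of nodes receiving the `h`-th seat (`h ≥ 1`) and `V (h-1)` is
the allocation just before, then along the path the ratios `V/R` are
non-increasing: for any non-root `c ∈ P`,
`V^{h-1}_{parent c} / R_{parent c} ≥ V^{h-1}_c / R_c`. -/
theorem adams_path_ratios_decrease (T : MLA) (V : ℕ → Fin (T.n + 1) → ℕ)
    (hrun : T.IsRun T.adamsCrit T.trivElig V) (h : ℕ) (hh : 1 ≤ h)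
    (P : Finset (Fin (T.n + 1)))
    (hP : T.IsStepWith T.adamsCrit T.trivElig P (V (h - 1)) (V h))
    (c : Fin (T.n + 1)) (hc : c ∈ P) (hc0 : c ≠ 0) :
    (V (h - 1) c : ℝ) / T.R c ≤ (V (h - 1) (T.parent c) : ℝ) / T.R (T.parent c) :=
  adams_path_ratios_decrease_general (hrun.isAlloc (h - 1)) hP hc hc0
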